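/- Let n be a positive integer with n ≡ 1 (mod 3) and let q be an indeterminate. Define Aq(k) = [6k+1]·(q;q³)_k⁶/(q³;q³)_k⁶·q^{3k}. Then ∑_{i+j+k ≤ n-1, i,j,k ≥ 0} Aq(i)Aq(j)Aq(k) ≡ [n]³·((q²;q³)_{(n-1)/3})⁹/((q³;q³)_{(n-1)/3})⁹ · {1 + 3[n]²·∑_{r=1}^{(n-1)/3}(q^{3r-1}/[3r-1]² - q^{3r}/[3r]²)} (mod Φ_n(q)⁶), as rational functions whose difference has Φ_n(q)⁶ dividing its numerator when the denominator is coprime to Φ_n(q). -/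

import Mathlib

open Finset

/-- The indeterminate `q` in the field of rational functions `ℚ(q)`. -/
noncomputable def qq : RatFunc ℚ := RatFunc.X

/-- The q-Pochhammer symbol `(x; q³)_k = ∏_{i=0}^{k-1} (1 - x q^{3i})`. -/
noncomputable def poch (x : RatFunc ℚ) (k : ℕ) : RatFunc ℚ :=
  ∏ i ∈ range k, (1 - x * qq ^ (3 * i))

/-- The q-integer `[s] = (1 - q^s)/(1 - q)`. -/
noncomputable def qint (s : ℕ) : RatFunc ℚ := (1 - qq ^ s) / (1 - qq)

/-- `A_q(k) = [6k+1] (q;q³)_k⁶ / (q³;q³)_k⁶ · q^{3k}`. -/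
noncomputable def Aq (k : ℕ) : RatFunc ℚ :=
  qint (6 * k + 1) * poch qq k ^ 6 / poch (qq ^ 3) k ^ 6 * qq ^ (3 * k)

section Jackson
variable {F : Type*} [Field F]

/-- The `q`-Pochhammer symbol `(x; q³)_k` over an arbitrary field. -/
def qPoch (q x : F) (k : ℕ) : F := ∏ i ∈ range k, (1 - x * q ^ (3 * i))

/-- The quadratic factor `(1 - z)² + z t`, which is `(1 - z y)(1 - z / y)` when
`t = (1 - y)(1 - 1 / y)`. -/
def quadFactor (t z : F) : F := (1 - z) ^ 2 + z * t

/-- The product of the quadratic factors along the progression `x q^{3i}`, `i < k`. -/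
def quadPoch (q t x : F) (k : ℕ) : F := ∏ i ∈ range k, quadFactor t (x * q ^ (3 * i))

/-- The summand of the very-well-poised series evaluated by `sum_jacksonTerm`. -/
def jacksonTerm (q t M : F) (k : ℕ) : F :=
  (1 - q ^ (6 * k + 1)) * qPoch q q k ^ 2 / qPoch q (q ^ 3) k ^ 2
    * (qPoch q (q * M) k * qPoch q (q / M) k / (qPoch q (q ^ 3 * M) k * qPoch q (q ^ 3 / M) k))
    * (quadPoch q t q k / quadPoch q t (q ^ 3) k) * q ^ (3 * k)

/-- The common factor of consecutive terms in the telescoping proof of `sum_jacksonTerm`. -/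
def jacksonCore (q t M : F) (k : ℕ) : F :=
  qPoch q q (k + 1) ^ 2 * quadPoch q t q (k + 1) / (qPoch q (q ^ 3) k ^ 2 * quadPoch q t (q ^ 3) k)
    * (qPoch q (q * (q ^ 3 * M)) k * qPoch q (q / M) k
      / (qPoch q (q ^ 3 * M) (k + 1) * qPoch q (q ^ 3 / M) k))

/-- The closed form of the terminating series `∑ k ≤ m, jacksonTerm q t (q ^ (3 m + 1)) k`. -/
def jacksonValue (q t : F) (m : ℕ) : F :=
  (1 - q ^ (3 * m + 1)) * (qPoch q (q ^ 2) m / qPoch q (q ^ 3) m)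
    * (quadPoch q t (q ^ 2) m / quadPoch q t (q ^ 3) m)

lemma qPoch_zero (q x : F) : qPoch q x 0 = 1 := by simp [qPoch]

lemma qPoch_succ (q x : F) (k : ℕ) : qPoch q x (k + 1) = qPoch q x k * (1 - x * q ^ (3 * k)) :=
  prod_range_succ _ _

lemma qPoch_succ_left (q x : F) (k : ℕ) :
    qPoch q x (k + 1) = (1 - x) * qPoch q (q ^ 3 * x) k := by
  rw [qPoch, prod_range_succ', mul_comm, qPoch]
  congr 1
  · simp
  · exact prod_congr rfl fun i _ => by ring

lemma quadPoch_zero (q t x : F) : quadPoch q t x 0 = 1 := by simp [quadPoch]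

lemma quadPoch_succ (q t x : F) (k : ℕ) :
    quadPoch q t x (k + 1) = quadPoch q t x k * quadFactor t (x * q ^ (3 * k)) :=
  prod_range_succ _ _

lemma jacksonTerm_succ (q t M : F) (k : ℕ) :
    jacksonTerm q t M (k + 1) = jacksonCore q t M k *
      ((1 - q ^ 7 * (q ^ (3 * k)) ^ 2) * (1 - q * M) * (1 - q / M * q ^ (3 * k)) * q ^ 3
          * q ^ (3 * k)
        / ((1 - q ^ 3 * q ^ (3 * k)) ^ 2 * quadFactor t (q ^ 3 * q ^ (3 * k))
          * (1 - q ^ 3 / M * q ^ (3 * k)))) := by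
  have h6 : q ^ (6 * (k + 1) + 1) = q ^ 7 * (q ^ (3 * k)) ^ 2 := by ring
  have h3 : q ^ (3 * (k + 1)) = q ^ 3 * q ^ (3 * k) := by ring
  rw [jacksonTerm, jacksonCore, h6, h3, qPoch_succ_left q (q * M), qPoch_succ q (q / M),
    qPoch_succ q (q ^ 3 / M), qPoch_succ q (q ^ 3) k, quadPoch_succ q t (q ^ 3) k,
    mul_left_comm (q ^ 3) q M]
  simp only [div_eq_mul_inv, mul_inv, mul_pow]
  ring

lemma jacksonTerm_shift_succ (q t M : F) (k : ℕ) (hq : q ≠ 0) (hM : 1 - q ^ 3 * M ≠ 0) :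
    jacksonTerm q t (q ^ 3 * M) (k + 1) = jacksonCore q t M k *
      ((1 - q ^ 7 * (q ^ (3 * k)) ^ 2) * (1 - q ^ 4 * M * q ^ (3 * k)) * (1 - q / (q ^ 3 * M))
          * (1 - q ^ 3 * M) * q ^ 3 * q ^ (3 * k)
        / ((1 - q ^ 3 * q ^ (3 * k)) ^ 2 * quadFactor t (q ^ 3 * q ^ (3 * k))
          * ((1 - q ^ 6 * M * q ^ (3 * k)) * (1 - 1 / M)))) := by
  have h6 : q ^ (6 * (k + 1) + 1) = q ^ 7 * (q ^ (3 * k)) ^ 2 := by ring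
  have h3 : q ^ (3 * (k + 1)) = q ^ 3 * q ^ (3 * k) := by ring
  have e1 : q ^ 3 * (q / (q ^ 3 * M)) = q / M := by field_simp
  have e2 : q ^ 3 / (q ^ 3 * M) = 1 / M := by field_simp
  have e3 : q ^ 3 * (1 / M) = q ^ 3 / M := by ring
  have e4 : qPoch q (q ^ 3 * (q ^ 3 * M)) (k + 1)
      = qPoch q (q ^ 3 * M) (k + 1) * (1 - q ^ 6 * M * q ^ (3 * k)) / (1 - q ^ 3 * M) := by
    rw [eq_div_iff hM, mul_comm, ← qPoch_succ_left, qPoch_succ, h3]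
    ring
  rw [jacksonTerm, jacksonCore, h6, h3, qPoch_succ_left q (q / (q ^ 3 * M)), e1, e2,
    qPoch_succ_left q (1 / M), e3, e4, qPoch_succ q (q * (q ^ 3 * M)),
    qPoch_succ q (q ^ 3) k, quadPoch_succ q t (q ^ 3) k]
  simp only [div_eq_mul_inv, mul_inv, mul_pow, inv_inv]
  ring

lemma jacksonCore_succ (q t M : F) (k : ℕ) :
    jacksonCore q t M (k + 1) = jacksonCore q t M k *
      ((1 - q ^ 4 * q ^ (3 * k)) ^ 2 * quadFactor t (q ^ 4 * q ^ (3 * k))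
          * (1 - q ^ 4 * M * q ^ (3 * k)) * (1 - q / M * q ^ (3 * k))
        / ((1 - q ^ 3 * q ^ (3 * k)) ^ 2 * quadFactor t (q ^ 3 * q ^ (3 * k))
          * ((1 - q ^ 6 * M * q ^ (3 * k)) * (1 - q ^ 3 / M * q ^ (3 * k))))) := by
  have h3 : q ^ (3 * (k + 1)) = q ^ 3 * q ^ (3 * k) := by ring
  have h4 : q * (q ^ 3 * q ^ (3 * k)) = q ^ 4 * q ^ (3 * k) := by ring
  rw [jacksonCore, jacksonCore, qPoch_succ q q (k + 1), quadPoch_succ q t q (k + 1),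
    qPoch_succ q (q ^ 3) k, quadPoch_succ q t (q ^ 3) k, qPoch_succ q (q * (q ^ 3 * M)),
    qPoch_succ q (q / M), qPoch_succ q (q ^ 3 * M) (k + 1), qPoch_succ q (q ^ 3 / M), h3, h4]
  simp only [div_eq_mul_inv, mul_inv, mul_pow]
  ring

/-- The telescoping identity behind `sum_jacksonTerm`. -/
lemma sum_jacksonTerm_shift_sub (q t M : F) (k : ℕ) (hq : q ≠ 0) (hM0 : M ≠ 0) (hM1 : 1 - M ≠ 0)
    (hM : ∀ i ≤ k + 1, 1 - q ^ (3 * i) * M ≠ 0)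
    (hMinv : ∀ i < k, M - q ^ (3 * (i + 1)) ≠ 0)
    (hq1 : ∀ i < k, 1 - q ^ (3 * (i + 1)) ≠ 0)
    (hg : ∀ i < k, quadFactor t (q ^ (3 * (i + 1))) ≠ 0) :
    ∑ j ∈ range (k + 1),
      (jacksonTerm q t (q ^ 3 * M) j * ((1 - M) * (1 - q ^ 2 * M) * quadFactor t (q ^ 2 * M))
        - jacksonTerm q t M j * ((1 - q ^ 3 * M) * (1 - q * M) * quadFactor t (q * M)))
      = -M * (1 - q ^ 3 * M ^ 2) * (1 - q ^ 3 * M) * jacksonCore q t M k := by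
  induction k with
  | zero =>
    have := hM 1 le_rfl
    have h1 : 1 - q ^ 3 * M ≠ 0 := by simpa using this
    simp [jacksonTerm, jacksonCore, qPoch_succ, qPoch_zero, quadPoch_succ, quadPoch_zero]
    field_simp
    simp only [quadFactor]
    ring
  | succ k ih =>
    rw [sum_range_succ, ih (fun i hi => hM i (by omega)) (fun i hi => hMinv i (by omega))
      (fun i hi => hq1 i (by omega)) (fun i hi => hg i (by omega)),
      jacksonTerm_shift_succ q t M k hq (by simpa using hM 1 (by omega)), jacksonTerm_succ,
      jacksonCore_succ]
    have h3 : q ^ (3 * (k + 1)) = q ^ 3 * q ^ (3 * k) := by ring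
    have h6 : q ^ (3 * (k + 2)) = q ^ 6 * q ^ (3 * k) := by ring
    have a1 := hMinv k (by omega)
    have a2 := hq1 k (by omega)
    have a3 := hg k (by omega)
    have a4 := hM (k + 2) (by omega)
    rw [h3] at a1 a2 a3
    rw [h6] at a4
    have a4' : 1 - q ^ 6 * M * q ^ (3 * k) ≠ 0 := by
      convert a4 using 1; ring
    have a1' : 1 - q ^ 3 / M * q ^ (3 * k) ≠ 0 := by
      have : 1 - q ^ 3 / M * q ^ (3 * k) = (M - q ^ 3 * q ^ (3 * k)) / M := by field_simp
      rw [this]; exact div_ne_zero a1 hM0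
    have a5 : 1 - 1 / M ≠ 0 := by
      have : 1 - 1 / M = -(1 - M) / M := by field_simp; ring
      rw [this]; exact div_ne_zero (neg_ne_zero.mpr hM1) hM0
    generalize q ^ (3 * k) = K at *
    generalize jacksonCore q t M k = C
    have b1 : 1 - q ^ 3 / M * K = (M - q ^ 3 * K) / M := by field_simp
    have b2 : 1 - 1 / M = -(1 - M) / M := by field_simp; ring
    have b3 : 1 - q / (q ^ 3 * M) = (q ^ 2 * M - 1) / (q ^ 2 * M) := by field_simp
    have b4 : 1 - q / M * K = (M - q * K) / M := by field_simp
    rw [b1, b2, b3, b4]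
    clear hMinv hq1 hg hM ih h3 h6 a1' a5 a4 b1 b2 b3 b4
    have hG : quadFactor t (q ^ 3 * K) = (1 - q ^ 3 * K) ^ 2 + q ^ 3 * K * t := rfl
    rw [show quadFactor t (q ^ 4 * K) = (1 - q ^ 4 * K) ^ 2 + q ^ 4 * K * t from rfl,
      show quadFactor t (q ^ 2 * M) = (1 - q ^ 2 * M) ^ 2 + q ^ 2 * M * t from rfl,
      show quadFactor t (q * M) = (1 - q * M) ^ 2 + q * M * t from rfl]
    generalize quadFactor t (q ^ 3 * K) = G at *
    generalize hA : 1 - q ^ 3 * K = A at *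
    generalize hB : M - q ^ 3 * K = B at *
    generalize hD : 1 - q ^ 6 * M * K = D at *
    generalize hE : 1 - M = E at *
    field_simp
    subst hG hA hB hD hE
    ring

lemma jacksonValue_succ (q t : F) (m : ℕ) (hM : 1 - q ^ (3 * m + 1) ≠ 0)
    (hq : 1 - q ^ (3 * (m + 1)) ≠ 0) (hg : quadFactor t (q ^ (3 * (m + 1))) ≠ 0) :
    jacksonValue q t (m + 1) * ((1 - q ^ (3 * m + 1)) * (1 - q ^ (3 * (m + 1)))
        * quadFactor t (q ^ (3 * (m + 1))))
      = jacksonValue q t m * ((1 - q ^ (3 * (m + 1) + 1)) * (1 - q ^ (3 * m + 2))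
        * quadFactor t (q ^ (3 * m + 2))) := by
  have e1 : q ^ 2 * q ^ (3 * m) = q ^ (3 * m + 2) := by ring
  have e2 : q ^ 3 * q ^ (3 * m) = q ^ (3 * (m + 1)) := by ring
  simp only [jacksonValue, qPoch_succ, quadPoch_succ, e1, e2]
  field_simp

/-- A terminating very-well-poised summation (a special case of Jackson's `₈φ₇` sum). -/
theorem sum_jacksonTerm (q t : F) (m : ℕ) (hq : q ≠ 0)
    (hinj : Function.Injective fun s : ℕ => q ^ s)
    (hg : ∀ s, 0 < s → s ≤ 3 * m → quadFactor t (q ^ s) ≠ 0) :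
    ∑ k ∈ range (m + 1), jacksonTerm q t (q ^ (3 * m + 1)) k = jacksonValue q t m := by
  have hq1 (s : ℕ) (hs : 0 < s) : 1 - q ^ s ≠ 0 := fun h => by
    have : s = 0 := hinj (by simpa using (sub_eq_zero.mp h).symm)
    omega
  induction m with
  | zero => simp [jacksonTerm, jacksonValue, qPoch_zero, quadPoch_zero]
  | succ m ih =>
    have hM := hq1 (3 * m + 1) (by omega)
    have hq' := hq1 (3 * (m + 1)) (by omega)
    have hg' := hg (3 * (m + 1)) (by omega) le_rfl
    have hzero : qPoch q (q / q ^ (3 * m + 1)) (m + 1) = 0 := by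
      rw [qPoch_succ, pow_succ]
      field_simp
      simp
    have htel := sum_jacksonTerm_shift_sub q t (q ^ (3 * m + 1)) (m + 1) hq (pow_ne_zero _ hq) hM
      (fun i _ => by rw [← pow_add]; exact hq1 _ (by omega))
      (fun i _ h => by
        have : 3 * m + 1 = 3 * (i + 1) := hinj (sub_eq_zero.mp h)
        omega)
      (fun i _ => hq1 _ (by omega))
      (fun i hi => hg _ (by omega) (by omega))
    have hcore : jacksonCore q t (q ^ (3 * m + 1)) (m + 1) = 0 := by
      simp [jacksonCore, hzero]
    have hlast : jacksonTerm q t (q ^ (3 * m + 1)) (m + 1) = 0 := by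
      simp [jacksonTerm, hzero]
    rw [hcore, mul_zero, sum_sub_distrib, ← sum_mul, ← sum_mul,
      sum_range_succ (jacksonTerm q t (q ^ (3 * m + 1))), hlast, add_zero,
      ih fun s h0 hs => hg s h0 (by omega), sub_eq_zero] at htel
    have e1 : q ^ 3 * q ^ (3 * m + 1) = q ^ (3 * (m + 1) + 1) := by ring
    have e2 : q ^ 2 * q ^ (3 * m + 1) = q ^ (3 * (m + 1)) := by ring
    have e3 : q * q ^ (3 * m + 1) = q ^ (3 * m + 2) := by ring
    rw [e1, e2, e3, ← jacksonValue_succ q t m hM hq' hg'] at htel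
    exact mul_right_cancel₀ (mul_ne_zero (mul_ne_zero hM hq') hg') htel

end Jackson

section Congruence
variable {F Γ : Type*} [Field F] [LinearOrderedCommGroupWithZero Γ]

/-- Two `v`-integral elements of a valued field whose difference has valuation at most `δ`. -/
def ValCongr (v : Valuation F Γ) (δ : Γ) (x y : F) : Prop := v x ≤ 1 ∧ v y ≤ 1 ∧ v (x - y) ≤ δ

namespace ValCongr
variable {v : Valuation F Γ} {δ : Γ} {x y x' y' : F}

lemma refl (hx : v x ≤ 1) : ValCongr v δ x x := ⟨hx, hx, by simp⟩

lemma symm (h : ValCongr v δ x y) : ValCongr v δ y x :=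
  ⟨h.2.1, h.1, by rw [v.map_sub_swap]; exact h.2.2⟩

lemma trans {z : F} (h : ValCongr v δ x y) (h' : ValCongr v δ y z) : ValCongr v δ x z :=
  ⟨h.1, h'.2.1, by
    rw [← sub_add_sub_cancel x y z]
    exact v.map_add_le h.2.2 h'.2.2⟩

lemma mul (h : ValCongr v δ x y) (h' : ValCongr v δ x' y') :
    ValCongr v δ (x * x') (y * y') := by
  refine ⟨by rw [map_mul]; exact mul_le_one' h.1 h'.1,
    by rw [map_mul]; exact mul_le_one' h.2.1 h'.2.1, ?_⟩
  rw [show x * x' - y * y' = (x - y) * x' + y * (x' - y') by ring]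
  refine v.map_add_le ?_ ?_ <;> rw [map_mul]
  · exact (mul_le_mul' h.2.2 h'.1).trans_eq (mul_one δ)
  · exact (mul_le_mul' h.2.1 h'.2.2).trans_eq (one_mul δ)

lemma prod {ι : Type*} (s : Finset ι) {f g : ι → F} (h : ∀ i ∈ s, ValCongr v δ (f i) (g i)) :
    ValCongr v δ (∏ i ∈ s, f i) (∏ i ∈ s, g i) := by
  classical
  induction s using Finset.induction_on with
  | empty => simpa using refl (v := v) (δ := δ) v.map_one.le
  | insert a s ha ih =>
    rw [prod_insert ha, prod_insert ha]
    exact (h a (mem_insert_self a s)).mul (ih fun i hi => h i (mem_insert_of_mem hi))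

lemma sum {ι : Type*} (s : Finset ι) {f g : ι → F} (h : ∀ i ∈ s, ValCongr v δ (f i) (g i)) :
    ValCongr v δ (∑ i ∈ s, f i) (∑ i ∈ s, g i) :=
  ⟨v.map_sum_le fun i hi => (h i hi).1, v.map_sum_le fun i hi => (h i hi).2.1, by
    rw [← sum_sub_distrib]
    exact v.map_sum_le fun i hi => (h i hi).2.2⟩

lemma div (h : ValCongr v δ x y) (h' : ValCongr v δ x' y') (hx : v x' = 1) (hy : v y' = 1) :
    ValCongr v δ (x / x') (y / y') := by
  have hx0 : x' ≠ 0 := by rintro rfl; simp at hx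
  have hy0 : y' ≠ 0 := by rintro rfl; simp at hy
  refine ⟨by simpa [hx] using h.1, by simpa [hy] using h.2.1, ?_⟩
  rw [div_sub_div _ _ hx0 hy0, map_div₀, map_mul, hx, hy, mul_one, div_one, mul_comm x' y]
  exact (h.mul h'.symm).2.2

end ValCongr

variable {v : Valuation F Γ}

/-- A product of factors `1 - t a_i` agrees with its linear part up to `t²`. -/
lemma valCongr_prod_one_sub_mul {t : F} (ht : v t ≤ 1) {ι : Type*} (s : Finset ι) {a : ι → F}
    (ha : ∀ i ∈ s, v (a i) ≤ 1) :
    ValCongr v (v t ^ 2) (∏ i ∈ s, (1 - t * a i)) (1 - t * ∑ i ∈ s, a i) := by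
  classical
  have hint {b : F} (hb : v b ≤ 1) : v (1 - t * b) ≤ 1 :=
    v.map_sub_le v.map_one.le (by rw [map_mul]; exact mul_le_one' ht hb)
  induction s using Finset.induction_on with
  | empty => simpa using ValCongr.refl (v := v) v.map_one.le
  | insert i s hi ih =>
    have hai := ha i (mem_insert_self i s)
    have hs : v (∑ j ∈ s, a j) ≤ 1 := v.map_sum_le fun j hj => ha j (mem_insert_of_mem hj)
    rw [prod_insert hi, sum_insert hi]
    refine ((ValCongr.refl (hint hai)).mul (ih fun j hj => ha j (mem_insert_of_mem hj))).trans
      ⟨?_, hint (v.map_add_le hai hs), ?_⟩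
    · rw [map_mul]
      exact mul_le_one' (hint hai) (hint hs)
    · rw [show (1 - t * a i) * (1 - t * ∑ j ∈ s, a j) - (1 - t * (a i + ∑ j ∈ s, a j))
        = t ^ 2 * (a i * ∑ j ∈ s, a j) by ring, map_mul, map_pow, map_mul]
      exact mul_le_of_le_one_right' (mul_le_one' hai hs)

lemma map_quadFactor_eq_one {t z : F} (ht : v t < 1) (hz : v z ≤ 1) (hz1 : v (1 - z) = 1) :
    v (quadFactor t z) = 1 := by
  have h1 : v ((1 - z) ^ 2) = 1 := by rw [map_pow, hz1, one_pow]
  rw [quadFactor, v.map_add_eq_of_lt_left, h1]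
  rw [h1, map_mul]
  exact (mul_le_of_le_one_left' hz).trans_lt ht

lemma valCongr_quadFactor_mul_neg {t z : F} (ht : v t < 1) (hz : v z ≤ 1) :
    ValCongr v (v t ^ 2) (quadFactor t z * quadFactor (-t) z) ((1 - z) ^ 4) := by
  have h1 : v (1 - z) ≤ 1 := v.map_sub_le v.map_one.le hz
  have hint {s : F} (hs : v s < 1) : v (quadFactor s z) ≤ 1 :=
    v.map_add_le (by rw [map_pow]; exact pow_le_one' h1 2)
      (by rw [map_mul]; exact mul_le_one' hz hs.le)
  refine ⟨?_, by rw [map_pow]; exact pow_le_one' h1 4, ?_⟩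
  · rw [map_mul]
    exact mul_le_one' (hint ht) (hint (by rwa [v.map_neg]))
  · rw [quadFactor, quadFactor, show ((1 - z) ^ 2 + z * t) * ((1 - z) ^ 2 + z * -t) - (1 - z) ^ 4
      = -(t ^ 2 * z ^ 2) by ring, v.map_neg, map_mul, map_pow, map_pow]
    exact mul_le_of_le_one_right' (pow_le_one' hz 2)

lemma valCongr_quadFactor_neg_div {t z w : F} (ht : v t < 1) (hz : v z ≤ 1) (hw : v w ≤ 1)
    (hz1 : v (1 - z) = 1) (hw1 : v (1 - w) = 1) :
    ValCongr v (v t ^ 2) (quadFactor (-t) z / quadFactor (-t) w)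
      (((1 - z) / (1 - w)) ^ 2 * (1 - t * (z / (1 - z) ^ 2 - w / (1 - w) ^ 2))) := by
  have ht' : v (-t) < 1 := by rwa [v.map_neg]
  have hgz := map_quadFactor_eq_one ht' hz hz1
  have hgw := map_quadFactor_eq_one ht' hw hw1
  have hz0 : 1 - z ≠ 0 := by intro h; simp [h] at hz1
  have hw0 : 1 - w ≠ 0 := by intro h; simp [h] at hw1
  have hg0 : quadFactor (-t) w ≠ 0 := by intro h; simp [h] at hgw
  have ha : v (z / (1 - z) ^ 2 - w / (1 - w) ^ 2) ≤ 1 :=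
    v.map_sub_le (by simpa [hz1] using hz) (by simpa [hw1] using hw)
  refine ⟨by simp [hgz, hgw], ?_, ?_⟩
  · rw [map_mul, map_pow, map_div₀, hz1, hw1, div_one, one_pow, one_mul]
    exact v.map_sub_le v.map_one.le (by rw [map_mul]; exact mul_le_one' ht.le ha)
  · rw [show quadFactor (-t) z / quadFactor (-t) w
        - ((1 - z) / (1 - w)) ^ 2 * (1 - t * (z / (1 - z) ^ 2 - w / (1 - w) ^ 2))
        = -(t ^ 2 * ((1 - z) ^ 2 * (w / (1 - w) ^ 2) * (z / (1 - z) ^ 2 - w / (1 - w) ^ 2)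
          / quadFactor (-t) w)) by
      rw [eq_comm, ← sub_eq_zero]
      have hg : quadFactor (-t) w = (1 - w) ^ 2 + w * -t := rfl
      rw [show quadFactor (-t) z = (1 - z) ^ 2 + z * -t from rfl]
      generalize quadFactor (-t) w = G at *
      field_simp
      subst hg
      ring]
    rw [v.map_neg, map_mul, map_pow, map_div₀, hgw, div_one, map_mul, map_mul, map_pow, hz1,
      map_div₀, map_pow, hw1]
    simp only [one_pow, one_mul, div_one]
    exact mul_le_of_le_one_right' (mul_le_one' hw ha)

/-- Truncating a triple convolution sum when the tail of the sequence is negligible. -/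
lemma map_triple_sum_sub_pow_le {δ : Γ} {a : ℕ → F} {m n : ℕ} (hmn : n = 3 * m + 1)
    (ha : ∀ k < n, v (a k) ≤ 1) (htail : ∀ k < n, m < k → v (a k) ≤ δ) :
    v (∑ i ∈ range n, ∑ j ∈ range (n - i), ∑ k ∈ range (n - i - j), a i * a j * a k
      - (∑ k ∈ range (m + 1), a k) ^ 3) ≤ δ := by
  set b : ℕ → F := fun k => if k ≤ m then a k else 0 with hb
  have hab (k : ℕ) (hk : k < n) : ValCongr v δ (a k) (b k) := by
    by_cases h : k ≤ m
    · simpa [hb, h] using ValCongr.refl (ha k hk)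
    · simpa [hb, h, ValCongr] using ⟨ha k hk, htail k hk (by omega)⟩
  have hsum (N : ℕ) (hN : m + 1 ≤ N) : ∑ k ∈ range N, b k = ∑ k ∈ range (m + 1), a k := by
    rw [← sum_subset (range_subset_range.mpr hN)
      (fun k _ hk => if_neg (by rw [mem_range] at hk; omega))]
    exact sum_congr rfl fun k hk => if_pos (by rw [mem_range] at hk; omega)
  have htriple : ∑ i ∈ range n, ∑ j ∈ range (n - i), ∑ k ∈ range (n - i - j), b i * b j * b k
      = (∑ k ∈ range (m + 1), a k) ^ 3 := by
    have hinner (i j : ℕ) : ∑ k ∈ range (n - i - j), b i * b j * b k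
        = b i * b j * ∑ k ∈ range (m + 1), a k := by
      by_cases hi : i ≤ m
      · by_cases hj : j ≤ m
        · rw [← mul_sum, hsum _ (by omega)]
        · simp [hb, hj]
      · simp [hb, hi]
    have hmid (i : ℕ) : ∑ j ∈ range (n - i), b i * b j * ∑ k ∈ range (m + 1), a k
        = b i * (∑ k ∈ range (m + 1), a k) ^ 2 := by
      by_cases hi : i ≤ m
      · rw [← sum_mul, ← mul_sum, hsum _ (by omega)]
        ring
      · simp [hb, hi]
    simp only [hinner, hmid]
    rw [← sum_mul, hsum _ (by omega)]
    ring
  rw [← htriple]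
  refine (ValCongr.sum _ fun i hi => ValCongr.sum _ fun j hj => ValCongr.sum _ fun k hk => ?_).2.2
  simp only [mem_range] at hi hj hk
  exact ((hab i hi).mul (hab j (by omega))).mul (hab k (by omega))


lemma qPoch_mul_qPoch_div (q x : F) {M : F} (hM : M ≠ 0) (k : ℕ) :
    qPoch q (x * M) k * qPoch q (x / M) k = quadPoch q ((1 - M) * (1 - M⁻¹)) x k := by
  rw [qPoch, qPoch, quadPoch, ← prod_mul_distrib]
  refine prod_congr rfl fun i _ => ?_
  rw [quadFactor]
  field_simp
  ring

lemma valCongr_quadPoch_mul_neg {q t x : F} (ht : v t < 1) (hq : v q ≤ 1) (hx : v x ≤ 1) (k : ℕ) :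
    ValCongr v (v t ^ 2) (qPoch q x k ^ 4) (quadPoch q t x k * quadPoch q (-t) x k) := by
  rw [qPoch, quadPoch, quadPoch, ← prod_pow, ← prod_mul_distrib]
  refine (ValCongr.prod _ fun i _ => valCongr_quadFactor_mul_neg ht ?_).symm
  rw [map_mul, map_pow]
  exact mul_le_one' hx (pow_le_one' hq _)

lemma map_qPoch_cube_eq_one {q : F} {k : ℕ} (hq1 : ∀ i < k, v (1 - q ^ (3 * (i + 1))) = 1) :
    v (qPoch q (q ^ 3) k) = 1 := by
  rw [qPoch, map_prod]
  refine prod_eq_one fun i hi => ?_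
  rw [← hq1 i (mem_range.mp hi)]
  ring_nf

lemma map_quadPoch_cube_eq_one {q t : F} {k : ℕ} (ht : v t < 1) (hq : v q ≤ 1)
    (hq1 : ∀ i < k, v (1 - q ^ (3 * (i + 1))) = 1) : v (quadPoch q t (q ^ 3) k) = 1 := by
  rw [quadPoch, map_prod]
  refine prod_eq_one fun i hi => ?_
  have e : q ^ 3 * q ^ (3 * i) = q ^ (3 * (i + 1)) := by ring
  rw [e]
  exact map_quadFactor_eq_one ht (by rw [map_pow]; exact pow_le_one' hq _)
    (hq1 i (mem_range.mp hi))

lemma map_qPoch_le_one {q x : F} (hq : v q ≤ 1) (hx : v x ≤ 1) (k : ℕ) : v (qPoch q x k) ≤ 1 := by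
  rw [qPoch, map_prod]
  refine prod_le_one' fun i _ => v.map_sub_le v.map_one.le ?_
  rw [map_mul, map_pow]
  exact mul_le_one' hx (pow_le_one' hq _)

/-- The summand of the series, without the normalising factor `1 / (1 - q)`. -/
def seriesTerm (q : F) (k : ℕ) : F :=
  (1 - q ^ (6 * k + 1)) * qPoch q q k ^ 6 / qPoch q (q ^ 3) k ^ 6 * q ^ (3 * k)

lemma valCongr_seriesTerm_jacksonTerm {q M : F} {k : ℕ} (hM : M ≠ 0)
    (ht : v ((1 - M) * (1 - M⁻¹)) < 1) (hq : v q ≤ 1)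
    (hq1 : ∀ i < k, v (1 - q ^ (3 * (i + 1))) = 1) :
    ValCongr v (v ((1 - M) * (1 - M⁻¹)) ^ 2) (seriesTerm q k)
      (jacksonTerm q (-((1 - M) * (1 - M⁻¹))) M k) := by
  set t := (1 - M) * (1 - M⁻¹) with htdef
  have hpow (s : ℕ) : v (q ^ s) ≤ 1 := by rw [map_pow]; exact pow_le_one' hq s
  have hQ := map_qPoch_cube_eq_one hq1
  have hpos := map_quadPoch_cube_eq_one ht hq hq1
  have hneg := map_quadPoch_cube_eq_one (t := -t) (by rwa [v.map_neg]) hq hq1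
  have hratio := (valCongr_quadPoch_mul_neg ht hq hq k).div
    (valCongr_quadPoch_mul_neg ht hq (hpow 3) k) (by rw [map_pow, hQ, one_pow])
    (by rw [map_mul, hpos, hneg, one_mul])
  have hhead : v ((1 - q ^ (6 * k + 1)) * qPoch q q k ^ 2 / qPoch q (q ^ 3) k ^ 2) ≤ 1 := by
    rw [map_div₀, map_mul, map_pow, map_pow, hQ, one_pow, div_one]
    exact mul_le_one' (v.map_sub_le v.map_one.le (hpow _)) (pow_le_one' (map_qPoch_le_one hq hq k) 2)
  have hmul := ((ValCongr.refl hhead).mul hratio).mul (ValCongr.refl (hpow (3 * k)))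
  rw [jacksonTerm, qPoch_mul_qPoch_div q q hM, qPoch_mul_qPoch_div q (q ^ 3) hM, ← htdef]
  convert hmul using 1
  · rw [seriesTerm]
    ring
  · ring

lemma map_qPoch_div_le_one {q : F} {m : ℕ} (hq : v q ≤ 1)
    (hq1 : ∀ s, 0 < s → s ≤ 3 * m → v (1 - q ^ s) = 1) :
    v (qPoch q (q ^ 2) m / qPoch q (q ^ 3) m) ≤ 1 := by
  rw [map_div₀, map_qPoch_cube_eq_one fun i hi => hq1 _ (by omega) (by omega), div_one]
  exact map_qPoch_le_one hq (by rw [map_pow]; exact pow_le_one' hq 2) m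

lemma map_sum_correction_le_one {q : F} {m : ℕ} (hq : v q ≤ 1)
    (hq1 : ∀ s, 0 < s → s ≤ 3 * m → v (1 - q ^ s) = 1) :
    v (∑ i ∈ range m, (q ^ (3 * i + 2) / (1 - q ^ (3 * i + 2)) ^ 2
      - q ^ (3 * i + 3) / (1 - q ^ (3 * i + 3)) ^ 2)) ≤ 1 :=
  v.map_sum_le fun i hi => by
    rw [mem_range] at hi
    refine v.map_sub_le ?_ ?_
    · simpa [hq1 (3 * i + 2) (by omega) (by omega)] using pow_le_one' hq _
    · simpa [hq1 (3 * i + 3) (by omega) (by omega)] using pow_le_one' hq _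

/-- Modulo `t²`, the closed form depends on `t` only through the first-order term. -/
lemma valCongr_jacksonValue {q t : F} {m : ℕ} (ht : v t < 1) (hq : v q ≤ 1)
    (hq1 : ∀ s, 0 < s → s ≤ 3 * m → v (1 - q ^ s) = 1) :
    ValCongr v (v t ^ 2) (jacksonValue q (-t) m)
      ((1 - q ^ (3 * m + 1)) * (qPoch q (q ^ 2) m / qPoch q (q ^ 3) m) ^ 3
        * (1 - t * ∑ i ∈ range m, (q ^ (3 * i + 2) / (1 - q ^ (3 * i + 2)) ^ 2
          - q ^ (3 * i + 3) / (1 - q ^ (3 * i + 3)) ^ 2))) := by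
  have hpow (s : ℕ) : v (q ^ s) ≤ 1 := by rw [map_pow]; exact pow_le_one' hq s
  have e2 (i : ℕ) : q ^ 2 * q ^ (3 * i) = q ^ (3 * i + 2) := by ring
  have e3 (i : ℕ) : q ^ 3 * q ^ (3 * i) = q ^ (3 * i + 3) := by ring
  have h2 (i : ℕ) (hi : i ∈ range m) : v (1 - q ^ (3 * i + 2)) = 1 := by
    rw [mem_range] at hi
    exact hq1 _ (by omega) (by omega)
  have h3 (i : ℕ) (hi : i ∈ range m) : v (1 - q ^ (3 * i + 3)) = 1 := by
    rw [mem_range] at hi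
    exact hq1 _ (by omega) (by omega)
  have hP := map_qPoch_div_le_one hq hq1
  have hquad : ValCongr v (v t ^ 2) (quadPoch q (-t) (q ^ 2) m / quadPoch q (-t) (q ^ 3) m)
      ((qPoch q (q ^ 2) m / qPoch q (q ^ 3) m) ^ 2
        * ∏ i ∈ range m, (1 - t * (q ^ (3 * i + 2) / (1 - q ^ (3 * i + 2)) ^ 2
          - q ^ (3 * i + 3) / (1 - q ^ (3 * i + 3)) ^ 2))) := by
    simp only [qPoch, quadPoch, e2, e3]
    rw [← prod_div_distrib, ← prod_div_distrib, ← prod_pow, ← prod_mul_distrib]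
    exact ValCongr.prod _ fun i hi =>
      valCongr_quadFactor_neg_div ht (hpow _) (hpow _) (h2 i hi) (h3 i hi)
  have hlin := valCongr_prod_one_sub_mul ht.le (range m)
    (a := fun i => q ^ (3 * i + 2) / (1 - q ^ (3 * i + 2)) ^ 2
      - q ^ (3 * i + 3) / (1 - q ^ (3 * i + 3)) ^ 2) fun i hi =>
    v.map_sub_le (by simpa [h2 i hi] using pow_le_one' hq _)
      (by simpa [h3 i hi] using pow_le_one' hq _)
  have hP2 : v ((qPoch q (q ^ 2) m / qPoch q (q ^ 3) m) ^ 2) ≤ 1 := by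
    rw [map_pow]
    exact pow_le_one' hP 2
  have hhead : v ((1 - q ^ (3 * m + 1)) * (qPoch q (q ^ 2) m / qPoch q (q ^ 3) m)) ≤ 1 := by
    rw [map_mul]
    exact mul_le_one' (v.map_sub_le v.map_one.le (hpow _)) hP
  have h := (ValCongr.refl hhead).mul (hquad.trans ((ValCongr.refl hP2).mul hlin))
  rw [jacksonValue]
  convert h using 1
  ring

/-- The fourth-power congruence for the single series. -/
theorem valCongr_sum_seriesTerm {q : F} {m : ℕ} (hq : v q ≤ 1)
    (hinj : Function.Injective fun s : ℕ => q ^ s)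
    (hq1 : ∀ s, 0 < s → s ≤ 3 * m → v (1 - q ^ s) = 1) (hlt : v (1 - q ^ (3 * m + 1)) < 1) :
    ValCongr v (v (1 - q ^ (3 * m + 1)) ^ 4) (∑ k ∈ range (m + 1), seriesTerm q k)
      ((1 - q ^ (3 * m + 1)) * (qPoch q (q ^ 2) m / qPoch q (q ^ 3) m) ^ 3
        * (1 + (1 - q ^ (3 * m + 1)) ^ 2
          * ∑ i ∈ range m, (q ^ (3 * i + 2) / (1 - q ^ (3 * i + 2)) ^ 2
            - q ^ (3 * i + 3) / (1 - q ^ (3 * i + 3)) ^ 2))) := by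
  have hpow (s : ℕ) : v (q ^ s) ≤ 1 := by rw [map_pow]; exact pow_le_one' hq s
  have hq0 : q ≠ 0 := by
    rintro rfl
    exact absurd (@hinj 1 2 (by simp)) (by norm_num)
  set M := q ^ (3 * m + 1) with hMdef
  set T := ∑ i ∈ range m, (q ^ (3 * i + 2) / (1 - q ^ (3 * i + 2)) ^ 2
    - q ^ (3 * i + 3) / (1 - q ^ (3 * i + 3)) ^ 2)
  set P := qPoch q (q ^ 2) m / qPoch q (q ^ 3) m
  have hM0 : M ≠ 0 := pow_ne_zero _ hq0
  have hvM : v M = 1 := by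
    have := v.map_sub_eq_of_lt_left (x := 1) (y := 1 - M) (by simpa using hlt)
    simpa using this
  have hvt : v ((1 - M) * (1 - M⁻¹)) = v (1 - M) ^ 2 := by
    have : (1 - M) * (1 - M⁻¹) = -((1 - M) ^ 2 / M) := by field_simp; ring
    rw [this, v.map_neg, map_div₀, hvM, div_one, map_pow]
  have ht : v ((1 - M) * (1 - M⁻¹)) < 1 := by
    rw [hvt]
    exact pow_lt_one' hlt two_ne_zero
  have ht4 : v ((1 - M) * (1 - M⁻¹)) ^ 2 = v (1 - M) ^ 4 := by rw [hvt, ← pow_mul]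
  have hsum := ValCongr.sum (range (m + 1)) fun k hk =>
    valCongr_seriesTerm_jacksonTerm (k := k) hM0 ht hq fun i hi => hq1 (3 * (i + 1)) (by omega)
      (by rw [mem_range] at hk; omega)
  rw [sum_jacksonTerm q _ m hq0 hinj fun s hs hsm h0 => by
    have := map_quadFactor_eq_one (v := v) (by rwa [v.map_neg]) (hpow s) (hq1 s hs hsm)
    simp [h0] at this] at hsum
  have h := hsum.trans (valCongr_jacksonValue ht hq hq1)
  rw [ht4] at h
  refine h.trans ?_
  have hP : v P ≤ 1 := map_qPoch_div_le_one hq hq1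
  have hT1 : v T ≤ 1 := map_sum_correction_le_one hq hq1
  refine ⟨h.2.1, ?_, ?_⟩
  · rw [map_mul, map_mul, map_pow]
    refine mul_le_one' (mul_le_one' hlt.le (pow_le_one' hP 3)) (v.map_add_le v.map_one.le ?_)
    rw [map_mul, map_pow]
    exact mul_le_one' (pow_le_one' hlt.le 2) hT1
  · rw [show (1 - M) * P ^ 3 * (1 - (1 - M) * (1 - M⁻¹) * T)
        - (1 - M) * P ^ 3 * (1 + (1 - M) ^ 2 * T) = (1 - M) ^ 4 * (P ^ 3 * T / M) by
      field_simp
      ring, map_mul, map_pow, map_div₀, hvM, div_one, map_mul, map_pow]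
    exact mul_le_of_le_one_right' (mul_le_one' (pow_le_one' hP 3) hT1)


/-- Cubing a congruence modulo `u⁴` whose two sides are divisible by `u`. -/
lemma map_pow_three_sub_le {u x P T : F} (hu : v u ≤ 1) (hP : v P ≤ 1) (hT : v T ≤ 1)
    (h : v (x - u * P ^ 3 * (1 + u ^ 2 * T)) ≤ v u ^ 4) :
    v (x ^ 3 - u ^ 3 * P ^ 9 * (1 + 3 * u ^ 2 * T)) ≤ v u ^ 6 := by
  set y := u * P ^ 3 * (1 + u ^ 2 * T) with hy
  have h3 : v (3 : F) ≤ 1 := by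
    rw [show (3 : F) = 1 + 1 + 1 by norm_num]
    exact v.map_add_le (v.map_add_le v.map_one.le v.map_one.le) v.map_one.le
  have hyu : v y ≤ v u := by
    rw [hy, mul_assoc, map_mul]
    refine mul_le_of_le_one_right' ?_
    rw [map_mul, map_pow]
    refine mul_le_one' (pow_le_one' hP 3) (v.map_add_le v.map_one.le ?_)
    rw [map_mul, map_pow]
    exact mul_le_one' (pow_le_one' hu 2) hT
  have hxu : v x ≤ v u := by
    rw [← sub_add_cancel x y]
    refine v.map_add_le (h.trans ?_) hyu
    rw [pow_succ]
    exact mul_le_of_le_one_left' (pow_le_one' hu 3)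
  have hquad : v (x ^ 2 + x * y + y ^ 2) ≤ v u ^ 2 := by
    refine v.map_add_le (v.map_add_le ?_ ?_) ?_
    · rw [map_pow]
      exact pow_le_pow_left' hxu 2
    · rw [map_mul, sq]
      exact mul_le_mul' hxu hyu
    · rw [map_pow]
      exact pow_le_pow_left' hyu 2
  rw [show x ^ 3 - u ^ 3 * P ^ 9 * (1 + 3 * u ^ 2 * T) = (x - y) * (x ^ 2 + x * y + y ^ 2)
    + u ^ 6 * (P ^ 9 * (u * (3 * T ^ 2 + u ^ 2 * T ^ 3))) by rw [hy]; ring]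
  refine v.map_add_le ?_ ?_
  · rw [map_mul, show v u ^ 6 = v u ^ 4 * v u ^ 2 by rw [← pow_add]]
    exact mul_le_mul' h hquad
  · rw [map_mul, map_pow]
    refine mul_le_of_le_one_right' ?_
    rw [map_mul, map_mul, map_pow]
    refine mul_le_one' (pow_le_one' hP 9) (mul_le_one' hu (v.map_add_le ?_ ?_))
    · rw [map_mul, map_pow]
      exact mul_le_one' h3 (pow_le_one' hT 2)
    · rw [map_mul, map_pow, map_pow]
      exact mul_le_one' (pow_le_one' hu 2) (pow_le_one' hT 3)

end Congruence

section RationalFunctions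
open Polynomial

lemma dvd_of_cyclotomic_dvd_one_sub_X_pow {n s : ℕ} (hn : 0 < n)
    (h : cyclotomic n ℚ ∣ 1 - X ^ s) : n ∣ s := by
  have hζ := Complex.isPrimitiveRoot_exp n hn.ne'
  refine hζ.dvd_of_pow_eq_one s ?_
  obtain ⟨p, hp⟩ := h
  have hroot : aeval (Complex.exp (2 * Real.pi * Complex.I / n)) (cyclotomic n ℚ) = 0 := by
    rw [cyclotomic_eq_minpoly_rat hζ hn]
    exact minpoly.aeval _ _
  have := congrArg (aeval (Complex.exp (2 * Real.pi * Complex.I / n))) hp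
  rw [map_mul, hroot, zero_mul] at this
  have h1 : 1 - Complex.exp (2 * Real.pi * Complex.I / n) ^ s = 0 := by simpa using this
  exact (sub_eq_zero.mp h1).symm

lemma one_sub_qq_pow (s : ℕ) : 1 - qq ^ s = algebraMap ℚ[X] (RatFunc ℚ) (1 - X ^ s) := by
  simp [qq]

lemma qq_pow_injective : Function.Injective fun s : ℕ => qq ^ s := by
  intro a b h
  have h' : (X : ℚ[X]) ^ a = X ^ b := RatFunc.algebraMap_injective ℚ (by simpa [qq] using h)
  simpa using congrArg natDegree h'

lemma one_sub_qq_ne_zero : 1 - qq ≠ 0 := fun h => by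
  have : 1 = 0 := qq_pow_injective (by simpa using (sub_eq_zero.mp h).symm)
  omega

/-- The prime of `ℚ[X]` generated by the `n`-th cyclotomic polynomial. -/
noncomputable def cyclotomicPrime (n : ℕ) (hn : 0 < n) :
    IsDedekindDomain.HeightOneSpectrum ℚ[X] where
  asIdeal := Ideal.span {cyclotomic n ℚ}
  isPrime := (Ideal.span_singleton_prime (cyclotomic_ne_zero n ℚ)).mpr
    (cyclotomic.irreducible_rat hn).prime
  ne_bot := by simpa using cyclotomic_ne_zero n ℚ

lemma cyclotomicPrime_valuation_lt_one_iff {n : ℕ} (hn : 0 < n) (p : ℚ[X]) :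
    (cyclotomicPrime n hn).valuation (RatFunc ℚ) (algebraMap ℚ[X] (RatFunc ℚ) p) < 1
      ↔ cyclotomic n ℚ ∣ p := by
  rw [IsDedekindDomain.HeightOneSpectrum.valuation_lt_one_iff_mem]
  exact Ideal.mem_span_singleton

lemma cyclotomicPrime_valuation_eq_one {n : ℕ} (hn : 0 < n) {p : ℚ[X]}
    (hp : ¬ cyclotomic n ℚ ∣ p) :
    (cyclotomicPrime n hn).valuation (RatFunc ℚ) (algebraMap ℚ[X] (RatFunc ℚ) p) = 1 :=
  le_antisymm (IsDedekindDomain.HeightOneSpectrum.valuation_le_one _ p)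
    (not_lt.mp fun h => hp ((cyclotomicPrime_valuation_lt_one_iff hn p).mp h))

/-- A rational function of large valuation is a fraction whose numerator is divisible by the
corresponding power of the cyclotomic polynomial and whose denominator is prime to it. -/
lemma exists_fraction_of_valuation_le {n : ℕ} (hn : 0 < n) {x : RatFunc ℚ} {e : ℕ}
    (hx : (cyclotomicPrime n hn).valuation (RatFunc ℚ) x
      ≤ (cyclotomicPrime n hn).valuation (RatFunc ℚ)
        (algebraMap ℚ[X] (RatFunc ℚ) (cyclotomic n ℚ)) ^ e) :
    ∃ N D : ℚ[X], ¬ cyclotomic n ℚ ∣ D ∧ cyclotomic n ℚ ^ e ∣ N ∧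
      x * algebraMap ℚ[X] (RatFunc ℚ) D = algebraMap ℚ[X] (RatFunc ℚ) N := by
  set v := (cyclotomicPrime n hn).valuation (RatFunc ℚ)
  set Φ := algebraMap ℚ[X] (RatFunc ℚ) (cyclotomic n ℚ) with hΦ
  have hΦ0 : Φ ^ e ≠ 0 :=
    pow_ne_zero _ (RatFunc.algebraMap_ne_zero (cyclotomic_ne_zero n ℚ))
  set y := x / Φ ^ e with hy
  have hvy : v y ≤ 1 := by
    rw [hy, map_div₀, map_pow]
    exact div_le_one_of_le₀ hx zero_le
  have hden0 : algebraMap ℚ[X] (RatFunc ℚ) y.denom ≠ 0 :=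
    RatFunc.algebraMap_ne_zero y.denom_ne_zero
  have hyd : y * algebraMap ℚ[X] (RatFunc ℚ) y.denom = algebraMap ℚ[X] (RatFunc ℚ) y.num := by
    rw [← eq_div_iff hden0, y.num_div_denom]
  refine ⟨cyclotomic n ℚ ^ e * y.num, y.denom, fun hdvd => ?_, dvd_mul_right _ _, ?_⟩
  · have hnum : ¬ cyclotomic n ℚ ∣ y.num := fun h =>
      (cyclotomic.irreducible_rat hn).not_isUnit (y.isCoprime_num_denom.isUnit_of_dvd' h hdvd)
    have h1 := cyclotomicPrime_valuation_eq_one hn hnum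
    rw [← hyd, map_mul] at h1
    exact absurd h1 ((mul_le_of_le_one_left' hvy).trans_lt
      ((cyclotomicPrime_valuation_lt_one_iff hn _).mpr hdvd)).ne
  · rw [map_mul, map_pow, ← hyd, ← mul_assoc, ← hΦ, hy, mul_div_cancel₀ x hΦ0]

lemma Aq_eq_seriesTerm_div (k : ℕ) : Aq k = seriesTerm qq k / (1 - qq) := by
  rw [Aq, qint, seriesTerm]
  simp only [poch, qPoch]
  ring

/-- The target of the congruence, rewritten without `q`-integers. -/
lemma qint_closed_form_eq {n m : ℕ} (hnm : n = 3 * m + 1) :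
    qint n ^ 3 * poch (qq ^ 2) m ^ 9 / poch (qq ^ 3) m ^ 9
        * (1 + 3 * qint n ^ 2
          * ∑ r ∈ Icc 1 m,
              (qq ^ (3 * r - 1) / qint (3 * r - 1) ^ 2 - qq ^ (3 * r) / qint (3 * r) ^ 2))
      = (1 - qq ^ (3 * m + 1)) ^ 3 * (qPoch qq (qq ^ 2) m / qPoch qq (qq ^ 3) m) ^ 9
        * (1 + 3 * (1 - qq ^ (3 * m + 1)) ^ 2
          * ∑ i ∈ range m, (qq ^ (3 * i + 2) / (1 - qq ^ (3 * i + 2)) ^ 2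
            - qq ^ (3 * i + 3) / (1 - qq ^ (3 * i + 3)) ^ 2)) / (1 - qq) ^ 3 := by
  have h1 := one_sub_qq_ne_zero
  have hsum : ∑ r ∈ Icc 1 m,
      (qq ^ (3 * r - 1) / qint (3 * r - 1) ^ 2 - qq ^ (3 * r) / qint (3 * r) ^ 2)
      = (1 - qq) ^ 2 * ∑ i ∈ range m, (qq ^ (3 * i + 2) / (1 - qq ^ (3 * i + 2)) ^ 2
            - qq ^ (3 * i + 3) / (1 - qq ^ (3 * i + 3)) ^ 2) := by
    rw [← Ico_add_one_right_eq_Icc, sum_Ico_eq_sum_range, mul_sum, Nat.add_sub_cancel]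
    refine sum_congr rfl fun i _ => ?_
    rw [show 3 * (1 + i) - 1 = 3 * i + 2 by omega, show 3 * (1 + i) = 3 * i + 3 by omega, qint,
      qint, div_pow, div_pow, div_div_eq_mul_div, div_div_eq_mul_div]
    ring
  rw [hsum, hnm, qint]
  simp only [poch, qPoch]
  field_simp

end RationalFunctions

/-- Theorem 1.3: for `n ≡ 1 (mod 3)`,
`∑_{i+j+k≤n-1} A_q(i)A_q(j)A_q(k) ≡ [n]³ (q²;q³)_{(n-1)/3}⁹/(q³;q³)_{(n-1)/3}⁹ ·
{1 + 3[n]² ∑_{r=1}^{(n-1)/3} (q^{3r-1}/[3r-1]² - q^{3r}/[3r]²)} (mod Φ_n(q)⁶)`,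
i.e. the difference can be written as `N/D` with `Φ_n(q) ∤ D` and `Φ_n(q)⁶ ∣ N`. -/
theorem stmt_11 (n : ℕ) (hn : 0 < n) (h3 : n % 3 = 1) :
    ∃ N D : Polynomial ℚ, ¬ (Polynomial.cyclotomic n ℚ ∣ D) ∧
      (Polynomial.cyclotomic n ℚ) ^ 6 ∣ N ∧
      ((∑ i ∈ range n, ∑ j ∈ range (n - i), ∑ k ∈ range (n - i - j), Aq i * Aq j * Aq k)
        - qint n ^ 3 * poch (qq ^ 2) ((n - 1) / 3) ^ 9 / poch (qq ^ 3) ((n - 1) / 3) ^ 9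
          * (1 + 3 * qint n ^ 2
            * ∑ r ∈ Icc 1 ((n - 1) / 3),
                (qq ^ (3 * r - 1) / qint (3 * r - 1) ^ 2 - qq ^ (3 * r) / qint (3 * r) ^ 2)))
        * algebraMap (Polynomial ℚ) (RatFunc ℚ) D
      = algebraMap (Polynomial ℚ) (RatFunc ℚ) N := by
  obtain ⟨m, hm⟩ : ∃ m, n = 3 * m + 1 := ⟨n / 3, by omega⟩
  have hm' : (n - 1) / 3 = m := by omega
  rw [hm', qint_closed_form_eq hm]
  refine exists_fraction_of_valuation_le hn ?_
  set v := (cyclotomicPrime n hn).valuation (RatFunc ℚ)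
  rcases Nat.eq_zero_or_pos m with rfl | hmpos
  · subst hm
    simp [Aq_eq_seriesTerm_div, seriesTerm, qPoch_zero, one_sub_qq_ne_zero]
  have hunit (s : ℕ) (hs : ¬ n ∣ s) : v (1 - qq ^ s) = 1 := by
    rw [one_sub_qq_pow]
    exact cyclotomicPrime_valuation_eq_one hn
      fun h => hs (dvd_of_cyclotomic_dvd_one_sub_X_pow hn h)
  have hdvd : Polynomial.cyclotomic n ℚ ∣ 1 - Polynomial.X ^ n := by
    rw [← neg_sub, dvd_neg]
    exact Polynomial.cyclotomic.dvd_X_pow_sub_one n ℚ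
  have hlt : v (1 - qq ^ n) < 1 := by
    rw [one_sub_qq_pow]
    exact (cyclotomicPrime_valuation_lt_one_iff hn _).mpr hdvd
  have hle : v (1 - qq ^ n) ≤ v (algebraMap _ _ (Polynomial.cyclotomic n ℚ)) := by
    obtain ⟨p, hp⟩ := hdvd
    rw [one_sub_qq_pow, hp, map_mul, map_mul]
    exact mul_le_of_le_one_right' (IsDedekindDomain.HeightOneSpectrum.valuation_le_one _ p)
  have hq : v qq ≤ 1 := by
    have := IsDedekindDomain.HeightOneSpectrum.valuation_le_one (K := RatFunc ℚ)
      (cyclotomicPrime n hn) Polynomial.X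
    rwa [qq, ← RatFunc.algebraMap_X]
  have hpow (s : ℕ) : v (qq ^ s) ≤ 1 := by rw [map_pow]; exact pow_le_one' hq s
  have hq1 (s : ℕ) (hs : 0 < s) (hsm : s ≤ 3 * m) : v (1 - qq ^ s) = 1 :=
    hunit s (Nat.not_dvd_of_pos_of_lt hs (by omega))
  have hone : v (1 - qq) = 1 := by simpa using hq1 1 one_pos (by omega)
  have hQ (k : ℕ) (hk : k < n) : v (qPoch qq (qq ^ 3) k) = 1 :=
    map_qPoch_cube_eq_one fun i hi => hunit _ fun h => by
      have hcop : Nat.Coprime n 3 := by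
        simp [hm]
      exact Nat.not_dvd_of_pos_of_lt (Nat.succ_pos i) (by omega) (hcop.dvd_of_dvd_mul_left h)
  have hA (k : ℕ) (hk : k < n) : v (Aq k) ≤ v (qPoch qq qq k) ^ 6 := by
    rw [Aq_eq_seriesTerm_div, map_div₀, hone, div_one, seriesTerm, map_mul, map_div₀, map_mul,
      map_pow v (qPoch _ _ _), map_pow v (qPoch _ _ _), hQ k hk, one_pow, div_one]
    exact (mul_le_of_le_one_right' (hpow _)).trans
      (mul_le_of_le_one_left' (v.map_sub_le v.map_one.le (hpow _)))
  have htail (k : ℕ) (hk : m < k) : v (qPoch qq qq k) ≤ v (1 - qq ^ n) := by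
    rw [qPoch, ← mul_prod_erase _ _ (mem_range.mpr hk), map_mul, map_prod,
      show qq * qq ^ (3 * m) = qq ^ n by rw [hm]; ring]
    refine mul_le_of_le_one_right' (prod_le_one' fun i _ => v.map_sub_le v.map_one.le ?_)
    rw [map_mul]
    exact mul_le_one' hq (hpow _)
  have htriple := map_triple_sum_sub_pow_le (v := v) (a := Aq) hm
    (fun k hk => (hA k hk).trans (pow_le_one' (map_qPoch_le_one hq hq k) 6))
    (fun k hk hmk => (hA k hk).trans (pow_le_pow_left' (htail k hmk) 6))
  rw [hm] at hlt
  have hcube := map_pow_three_sub_le hlt.le (map_qPoch_div_le_one hq hq1)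
    (map_sum_correction_le_one hq hq1) (valCongr_sum_seriesTerm hq qq_pow_injective hq1 hlt).2.2
  have hS : (∑ k ∈ range (m + 1), Aq k) ^ 3
      = (∑ k ∈ range (m + 1), seriesTerm qq k) ^ 3 / (1 - qq) ^ 3 := by
    simp only [Aq_eq_seriesTerm_div]
    rw [← sum_div, div_pow]
  rw [← sub_add_sub_cancel _ ((∑ k ∈ range (m + 1), Aq k) ^ 3)]
  refine (v.map_add_le htriple ?_).trans (pow_le_pow_left' hle 6)
  rw [hS, ← sub_div, map_div₀, map_pow v (1 - qq), hone, one_pow, div_one, hm]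
  exact hcube
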